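/- arXiv:2511.06524 — 3 statements merged into one kernel-verified Lean document; each statement's English description precedes it below -/
import Mathlib

section
/- Let A ∈ ℝ^{n×n}, B ∈ ℝ^{n×m}, C ∈ ℝ^{p×n} and μ := (p+m)·n. Suppose the pair (C, A) is observable, i.e. the observability matrix [C; CA; …; C·A^{n−1}] has rank n, and F ∈ ℝ^{n×n} is Hurwitz with n distinct eigenvalues. Then there exist an invertible matrix T ∈ ℝ^{n×n} and a vector θ ∈ ℝ^{μ} such that: for every u : ℝ → ℝ^m, every differentiable x : ℝ → ℝ^n with x'(t) = A·x(t) + B·u(t) for all t ≥ 0, with y(t) := C·x(t), and every differentiable M : ℝ → ℝ^{n×μ} with M'(t) = F·M(t) + [y(t)^⊤ ⊗ I_n , u(t)^⊤ ⊗ I_n] for all t ≥ 0, it holds for all t ≥ 0 that T·x(t) = M(t)·θ + exp(F·t)·(T·x(0) − M(0)·θ). -/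
open Matrix Filter
open scoped Kronecker

/-- Column-stacking vectorization `vec X : (col, row) ↦ X row col`
(`vec X` stacks the columns of `X` one below another). -/
def mvec {l : ℕ} {K : Type*} (X : Matrix (Fin l) K ℝ) : K × Fin l → ℝ :=
  fun q => X q.2 q.1

/-- The Kronecker product `θᵀ ⊗ S` of a row vector `θᵀ` with a square matrix `S`,
with the trivial row index of `θᵀ` flattened away. -/
def rowKron {n : ℕ} {K : Type*} (θ : K → ℝ) (S : Matrix (Fin n) (Fin n) ℝ) :
    Matrix (Fin n) (K × Fin n) ℝ :=
  ((Matrix.of fun (_ : Fin 1) j => θ j) ⊗ₖ S).submatrix (fun i => ((0 : Fin 1), i)) id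

/-- Column index set of the Kreisselmeier filter state `M ∈ ℝ^{n × (p+m)n}`. -/
abbrev Kix (n m p : ℕ) := (Fin p × Fin n) ⊕ (Fin m × Fin n)

/-- The regressor `[yᵀ ⊗ Iₙ , uᵀ ⊗ Iₙ] ∈ ℝ^{n × (p+m)n}` (horizontal concatenation). -/
def regressor {m p : ℕ} (n : ℕ) (y : Fin p → ℝ) (u : Fin m → ℝ) :
    Matrix (Fin n) (Kix n m p) ℝ :=
  Matrix.fromCols (rowKron y (1 : Matrix (Fin n) (Fin n) ℝ))
    (rowKron u (1 : Matrix (Fin n) (Fin n) ℝ))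

/-- A real square matrix is Hurwitz if all of its eigenvalues over `ℂ`
have strictly negative real part. -/
def IsHurwitz {N : Type*} [Fintype N] [DecidableEq N] (A : Matrix N N ℝ) : Prop :=
  ∀ z ∈ spectrum ℂ (A.map (Complex.ofReal : ℝ → ℂ)), z.re < 0

/-- PBH test for stabilizability: for every `λ ∈ ℂ` with `Re λ ≥ 0`,
`rank [λ·I − A₀ , B₀] = q` over `ℂ`. -/
def IsStabilizable {q m : Type*} [Fintype q] [DecidableEq q] [Fintype m]
    (A₀ : Matrix q q ℝ) (B₀ : Matrix q m ℝ) : Prop :=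
  ∀ z : ℂ, 0 ≤ z.re →
    (Matrix.fromCols (z • (1 : Matrix q q ℂ) - A₀.map (Complex.ofReal : ℝ → ℂ))
      (B₀.map (Complex.ofReal : ℝ → ℂ))).rank = Fintype.card q

/-- Euclidean norm of a vector. -/
noncomputable def euclNorm {ι : Type*} [Fintype ι] (v : ι → ℝ) : ℝ :=
  Real.sqrt (∑ i, v i ^ 2)

/-- Frobenius norm of a matrix. -/
noncomputable def frobNorm {ι K : Type*} [Fintype ι] [Fintype K] (X : Matrix ι K ℝ) : ℝ :=
  Real.sqrt (∑ i, ∑ j, X i j ^ 2)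

/-- `F_ξ := I_μ ⊗ F`. -/
def Fxi {n m p : ℕ} (F : Matrix (Fin n) (Fin n) ℝ) :
    Matrix (Kix n m p × Fin n) (Kix n m p × Fin n) ℝ :=
  (1 : Matrix (Kix n m p) (Kix n m p) ℝ) ⊗ₖ F

/-- `B_ξ := [0_{pn²×m} ; I_m ⊗ vec(I_n)]` (vertical concatenation), written entrywise
on the flattened row index `Kix n m p × Fin n`. -/
def Bxi (n m p : ℕ) : Matrix (Kix n m p × Fin n) (Fin m) ℝ :=
  Matrix.of fun q j =>
    Sum.elim (fun _ => (0 : ℝ))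
      (fun ja => (1 : Matrix (Fin m) (Fin m) ℝ) ja.1 j *
        (1 : Matrix (Fin n) (Fin n) ℝ) ja.2 q.2) q.1

/-- `L_ξ := [I_p ⊗ vec(I_n) ; 0_{mn²×p}]` (vertical concatenation), written entrywise
on the flattened row index `Kix n m p × Fin n`. -/
def Lxi (n m p : ℕ) : Matrix (Kix n m p × Fin n) (Fin p) ℝ :=
  Matrix.of fun q j =>
    Sum.elim (fun ya => (1 : Matrix (Fin p) (Fin p) ℝ) ya.1 j *
        (1 : Matrix (Fin n) (Fin n) ℝ) ya.2 q.2) (fun _ => (0 : ℝ)) q.1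

/-!
It suffices to find `L` and an invertible `T` with `TA = FT + LC`: for `θ` the stacked columns of
`L` and `TB`, the error `e = Tx - Mθ` then satisfies `e' = Fe`.

By observability, Heymann's lemma provides row vectors `w₀ = 0` and `wᵢ₊₁ ∈ wᵢA + rows(C)` such
that `w₁, …, wₙ` is a basis. Write `wₙA = ∑ bᵢ wₙ₋ᵢ`. As the eigenvalues of `F` are distinct, its
minimal polynomial is the characteristic one, so `F` has a cyclic vector `f`. Then `s₀ = f`,
`sᵢ₊₁ = Fsᵢ - bᵢf` give another basis `s₀, …, sₙ₋₁`, and `T = ∑ sᵢwₙ₋ᵢ` solves the equation for a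
suitable `L`.
-/

section Endomorphism

open Polynomial

variable {K V : Type*} [Field K] [AddCommGroup V] [Module K V]

-- Greedy choice: if no admissible vector left the span of the first `k` ones, that span would be
-- `φ`-invariant and contain `U`, hence be everything.
lemma exists_map_add_notMem_span {φ : Module.End K V} {U : Submodule K V}
    (hU : ∀ S ∈ φ.invtSubmodule, U ≤ S → S = ⊤) {k : ℕ} (hk : k < Module.finrank K V)
    {w : ℕ → V} (hw : ∀ i < k, w (i + 1) - φ (w i) ∈ U) :
    ∃ x ∈ U, φ (w k) + x ∉ Submodule.span K (Set.range fun i : Fin k => w (i + 1)) := by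
  by_contra! hmem
  set S := Submodule.span K (Set.range fun i : Fin k => w (i + 1)) with hS
  have map_last_mem : φ (w k) ∈ S := by simpa using hmem 0 U.zero_mem
  have U_le : U ≤ S := fun x hx => by simpa using S.sub_mem (hmem x hx) map_last_mem
  have w_mem (i : ℕ) (hi : i < k) : w (i + 1) ∈ S := Submodule.subset_span ⟨⟨i, hi⟩, rfl⟩
  have invariant : S ∈ φ.invtSubmodule := by
    rw [Module.End.mem_invtSubmodule, hS, Submodule.span_le]
    rintro _ ⟨i, rfl⟩
    rcases (Nat.succ_le_of_lt i.2).eq_or_lt with last | lt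
    · simpa [← last] using map_last_mem
    · simpa using S.sub_mem (w_mem _ lt) (U_le (hw _ lt))
  have finrank_le : Module.finrank K S ≤ k :=
    (finrank_range_le_card fun i : Fin k => w (i + 1)).trans_eq (Fintype.card_fin k)
  rw [hU S invariant U_le, finrank_top] at finrank_le
  exact finrank_le.not_gt hk

-- Heymann's lemma in control theory, where `U` is the range of the input matrix.
theorem exists_linearIndependent_of_invtSubmodule_eq_top {φ : Module.End K V} {U : Submodule K V}
    (hU : ∀ S ∈ φ.invtSubmodule, U ≤ S → S = ⊤) {k : ℕ} (hk : k ≤ Module.finrank K V) :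
    ∃ w : ℕ → V, w 0 = 0 ∧ (∀ i < k, w (i + 1) - φ (w i) ∈ U) ∧
      LinearIndependent K fun i : Fin k => w (i + 1) := by
  induction k with
  | zero => exact ⟨0, rfl, by simp, linearIndependent_empty_type⟩
  | succ k ih =>
    obtain ⟨w, w_zero, hw, independent⟩ := ih (Nat.le_of_succ_le hk)
    obtain ⟨x, hx, notMem⟩ := exists_map_add_notMem_span hU hk hw
    have update_eq (i : ℕ) (hi : i ≤ k) :
        Function.update w (k + 1) (φ (w k) + x) i = w i :=
      Function.update_of_ne (by omega) _ _
    refine ⟨Function.update w (k + 1) (φ (w k) + x), ?_, fun i hi => ?_, ?_⟩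
    · rw [update_eq 0 k.zero_le, w_zero]
    · rw [update_eq i (Nat.le_of_lt_succ hi)]
      rcases (Nat.le_of_lt_succ hi).eq_or_lt with rfl | lt
      · simpa using hx
      · rw [update_eq (i + 1) lt]
        exact hw i lt
    · convert linearIndependent_finSnoc.2 ⟨independent, notMem⟩ using 1
      funext i
      refine Fin.lastCases ?_ (fun i => ?_) i
      · simp
      · simpa using update_eq (i + 1) i.2

/-- The iterates of `f` under Horner's scheme for `φ` with coefficients `-b i`: the `i`-th one is
`φ ^ i f - b 0 • φ ^ (i - 1) f - ⋯ - b (i - 1) • f`. It plays the role of the Krylov sequence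
`φ ^ i f`, with corrections chosen to make a sum of rank-one matrices telescope. -/
def hornerOrbit (φ : Module.End K V) (b : ℕ → K) (f : V) : ℕ → V
  | 0 => f
  | i + 1 => φ (hornerOrbit φ b f i) - b i • f

lemma pow_apply_mem_span_hornerOrbit (φ : Module.End K V) (b : ℕ → K) (f : V) (k : ℕ) :
    (φ ^ k) f ∈ Submodule.span K (hornerOrbit φ b f '' Set.Iic k) := by
  have orbit_mem {i k : ℕ} (h : i ≤ k) :
      hornerOrbit φ b f i ∈ Submodule.span K (hornerOrbit φ b f '' Set.Iic k) :=
    Submodule.subset_span ⟨i, h, rfl⟩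
  induction k with
  | zero => exact orbit_mem (le_refl 0)
  | succ k ih =>
    rw [pow_succ', Module.End.mul_apply]
    refine (Submodule.map_span_le φ _ _).2 ?_ (Submodule.mem_map_of_mem ih)
    rintro _ ⟨i, hi, rfl⟩
    have map_eq : φ (hornerOrbit φ b f i) =
        hornerOrbit φ b f (i + 1) + b i • hornerOrbit φ b f 0 := by simp [hornerOrbit]
    rw [map_eq]
    exact add_mem (orbit_mem (Nat.succ_le_succ hi))
      (Submodule.smul_mem _ _ (orbit_mem (Nat.zero_le _)))

lemma linearIndependent_hornerOrbit {φ : Module.End K V} {f : V} {k : ℕ}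
    (hf : LinearIndependent K fun i : Fin k => (φ ^ (i : ℕ)) f) (b : ℕ → K) :
    LinearIndependent K fun i : Fin k => hornerOrbit φ b f i := by
  have span_le : Submodule.span K (Set.range fun i : Fin k => (φ ^ (i : ℕ)) f) ≤
      Submodule.span K (Set.range fun i : Fin k => hornerOrbit φ b f i) := by
    rw [Submodule.span_le]
    rintro _ ⟨i, rfl⟩
    refine Submodule.span_mono ?_ (pow_apply_mem_span_hornerOrbit φ b f i)
    rintro _ ⟨j, hj, rfl⟩
    exact ⟨⟨j, lt_of_le_of_lt hj i.2⟩, rfl⟩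
  have : FiniteDimensional K (Submodule.span K (Set.range fun i : Fin k => hornerOrbit φ b f i)) :=
    FiniteDimensional.span_of_finite K (Set.finite_range _)
  rw [linearIndependent_iff_card_le_finrank_span]
  exact (linearIndependent_iff_card_le_finrank_span.1 hf).trans (Submodule.finrank_mono span_le)

lemma exists_forall_aeval_apply_eq_zero_imp [FiniteDimensional K V] (φ : Module.End K V) :
    ∃ f : V, ∀ p : K[X], aeval φ p f = 0 → aeval φ p = 0 := by
  obtain ⟨g, hg⟩ := Module.exists_ker_toSpanSingleton_eq_annihilator K[X] (Module.AEval' φ)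
  obtain ⟨f, rfl⟩ := (Module.AEval'.of φ).surjective g
  refine ⟨f, fun p hp => ?_⟩
  have p_smul : p • Module.AEval'.of φ f = 0 := by
    rw [Module.AEval'.of, ← Module.AEval.of_aeval_smul, Module.End.smul_def, hp, map_zero]
  have mem_ker : p ∈ LinearMap.ker
      (LinearMap.toSpanSingleton K[X] _ (Module.AEval'.of φ f)) := p_smul
  rw [hg, ← span_minpoly_eq_annihilator, Ideal.mem_span_singleton] at mem_ker
  exact minpoly.dvd_iff.1 mem_ker

theorem exists_linearIndependent_pow_apply [FiniteDimensional K V] (φ : Module.End K V) :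
    ∃ f : V, LinearIndependent K fun i : Fin (minpoly K φ).natDegree => (φ ^ (i : ℕ)) f := by
  obtain ⟨f, hf⟩ := exists_forall_aeval_apply_eq_zero_imp φ
  refine ⟨f, Fintype.linearIndependent_iff.2 fun c hc => ?_⟩
  refine Fintype.linearIndependent_iff.1 (linearIndependent_pow φ) c ?_
  have aeval_eq : aeval φ (∑ i, C (c i) * X ^ (i : ℕ)) = ∑ i, c i • φ ^ (i : ℕ) := by
    simp [Algebra.smul_def]
  rw [← aeval_eq]
  refine hf _ ?_
  rw [aeval_eq, LinearMap.sum_apply]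
  exact hc

end Endomorphism

section Matrix

variable {K ι κ : Type*} [Field K] [Fintype ι] [Fintype κ]

-- Up to the rows of `C`, `A` shifts `w j` to `w (j + 1)` for `j < n`, and the term `f (w n A)` left
-- over at the end of the chain is what the corrections `b i • f` in the Horner orbit account for.
lemma sum_vecMulVec_hornerOrbit_mul {A F : Matrix ι ι K} {C : Matrix κ ι K} {n : ℕ}
    {w : ℕ → ι → K} {l : ℕ → κ → K} {b : ℕ → K} (w_zero : w 0 = 0)
    (hw : ∀ i < n, w (i + 1) = w i ᵥ* A + l i ᵥ* C)
    (hb : ∑ i ∈ Finset.range n, b i • w (n - i) = w n ᵥ* A) (f : ι → K) :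
    (∑ i ∈ Finset.range n, vecMulVec (hornerOrbit F.mulVecLin b f i) (w (n - i))) * A =
      F * ∑ i ∈ Finset.range n, vecMulVec (hornerOrbit F.mulVecLin b f i) (w (n - i)) -
        (∑ i ∈ Finset.range n,
          vecMulVec (hornerOrbit F.mulVecLin b f (i + 1)) (l (n - 1 - i))) * C := by
  set s := hornerOrbit F.mulVecLin b f
  have mulVec_s (i : ℕ) : F *ᵥ s i = s (i + 1) + b i • f := by simp [s, hornerOrbit]
  have vecMul_w (i : ℕ) (hi : i ∈ Finset.range n) :
      w (n - (i + 1)) ᵥ* A = w (n - i) - l (n - 1 - i) ᵥ* C := by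
    have := hw (n - (i + 1)) (by grind)
    rw [show n - (i + 1) + 1 = n - i by grind] at this
    rw [this, Nat.sub_sub, add_comm 1 i, add_sub_cancel_right]
  calc (∑ i ∈ Finset.range n, vecMulVec (s i) (w (n - i))) * A
      = ∑ i ∈ Finset.range (n + 1), vecMulVec (s i) (w (n - i) ᵥ* A) := by
        simp [Finset.sum_range_succ, Matrix.sum_mul, vecMulVec_mul, w_zero]
    _ = ∑ i ∈ Finset.range n, vecMulVec (s (i + 1)) (w (n - i) - l (n - 1 - i) ᵥ* C) +
          vecMulVec f (w n ᵥ* A) := by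
        rw [Finset.sum_range_succ']
        congr 1
        exact Finset.sum_congr rfl fun i hi => by rw [vecMul_w i hi]
    _ = ∑ i ∈ Finset.range n, vecMulVec (s (i + 1) + b i • f) (w (n - i)) -
          (∑ i ∈ Finset.range n, vecMulVec (s (i + 1)) (l (n - 1 - i))) * C := by
        have vecMulVec_sum : vecMulVec f (w n ᵥ* A) =
            ∑ i ∈ Finset.range n, vecMulVec f (b i • w (n - i)) := by
          rw [← hb]
          exact map_sum (vecMulVecBilin K K f) _ _
        rw [vecMulVec_sum, Matrix.sum_mul, ← Finset.sum_sub_distrib, ← Finset.sum_add_distrib]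
        refine Finset.sum_congr rfl fun i _ => ?_
        rw [vecMulVec_sub, vecMulVec_smul, add_vecMulVec, smul_vecMulVec, vecMulVec_mul]
        abel
    _ = _ := by simp only [← mulVec_s, Matrix.mul_sum, mul_vecMulVec]

variable [DecidableEq ι]

lemma isRoot_minpoly_of_isRoot_charpoly {F : Matrix ι ι K} {z : K} (hz : F.charpoly.IsRoot z) :
    (minpoly K F).IsRoot z := by
  rw [← mem_spectrum_iff_isRoot_charpoly, ← spectrum_toLin',
    ← Module.End.hasEigenvalue_iff_mem_spectrum] at hz
  rw [← minpoly_toLin']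
  exact Module.End.isRoot_of_hasEigenvalue hz

theorem minpoly_eq_charpoly_of_separable (F : Matrix ι ι K) (hF : F.charpoly.Separable) :
    minpoly K F = F.charpoly := by
  let L := AlgebraicClosure K
  let G : Matrix ι ι L := F.map (algebraMap K L)
  have G_charpoly : G.charpoly = F.charpoly.map (algebraMap K L) := F.charpoly_map _
  have roots_subset : G.charpoly.roots ⊆ ((minpoly K F).map (algebraMap K L)).roots := by
    intro z hz
    refine (Polynomial.mem_roots ((minpoly.monic F.isIntegral).map _).ne_zero).2 ?_
    refine (isRoot_minpoly_of_isRoot_charpoly (Polynomial.isRoot_of_mem_roots hz)).dvd ?_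
    refine minpoly.dvd L G ?_
    rw [Polynomial.aeval_map_algebraMap]
    exact (Polynomial.aeval_algHom_apply (Algebra.ofId K L).mapMatrix F _).trans (by simp)
  have charpoly_dvd : F.charpoly ∣ minpoly K F := by
    rw [← Polynomial.map_dvd_map' (algebraMap K L), ← G_charpoly]
    refine (IsAlgClosed.splits _).dvd_of_roots_le_roots G.charpoly_monic.ne_zero ?_
    refine (Multiset.le_iff_subset ?_).2 roots_subset
    rw [G_charpoly]
    exact Polynomial.nodup_roots hF.map
  exact Polynomial.eq_of_monic_of_associated (minpoly.monic F.isIntegral) F.charpoly_monic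
    (associated_of_dvd_dvd F.minpoly_dvd_charpoly charpoly_dvd)

lemma charpoly_separable_of_nodup_roots_map {L : Type*} [Field L] [IsAlgClosed L] (f : K →+* L)
    {F : Matrix ι ι K} (hF : (F.map f).charpoly.roots.Nodup) : F.charpoly.Separable := by
  rw [charpoly_map] at hF
  rw [← Polynomial.separable_map f]
  exact (Polynomial.nodup_roots_iff_of_splits (F.charpoly_monic.map f).ne_zero
    (IsAlgClosed.splits _)).1 hF

lemma isUnit_sum_vecMulVec {s w : κ → ι → K} (hs : LinearIndependent K s)
    (hw : LinearIndependent K w) (hcard : Fintype.card κ = Fintype.card ι) :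
    IsUnit (∑ k, vecMulVec (s k) (w k)) := by
  let e : ι ≃ κ := (Fintype.equivOfCardEq hcard).symm
  have isUnit_s : IsUnit (of (s ∘ e)) :=
    linearIndependent_rows_iff_isUnit.1 (hs.comp e e.injective)
  have isUnit_w : IsUnit (of (w ∘ e)) :=
    linearIndependent_rows_iff_isUnit.1 (hw.comp e e.injective)
  have eq_mul : ∑ k, vecMulVec (s k) (w k) = (of (s ∘ e))ᵀ * of (w ∘ e) := by
    ext i j
    simp [Matrix.sum_apply, vecMulVec_apply, mul_apply, ← e.sum_comp]
  rw [eq_mul]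
  exact ((of (s ∘ e)).isUnit_transpose.2 isUnit_s).mul isUnit_w

lemma eq_top_of_rank_observability {A : Matrix ι ι K} {C : Matrix κ ι K} {N : ℕ}
    (hobs : (of fun (q : Fin N × κ) j => (C * A ^ (q.1 : ℕ)) q.2 j).rank = Fintype.card ι)
    {S : Submodule K (ι → K)} (hA : S ∈ Module.End.invtSubmodule A.vecMulLinear)
    (hC : LinearMap.range C.vecMulLinear ≤ S) : S = ⊤ := by
  classical
  have row_mem (k : ℕ) (j : κ) : (C * A ^ k).row j ∈ S := by
    induction k with
    | zero => simpa using hC ⟨Pi.single j 1, single_one_vecMul j C⟩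
    | succ k ih => simpa [pow_succ, ← Matrix.mul_assoc, mul_apply_eq_vecMul, row] using hA ih
  rw [rank_eq_finrank_span_row] at hobs
  have span_rows_eq_top := Submodule.eq_top_of_finrank_eq
    (hobs.trans (Module.finrank_fintype_fun_eq_card K).symm)
  rw [eq_top_iff, ← span_rows_eq_top, Submodule.span_le]
  rintro _ ⟨q, rfl⟩
  exact row_mem q.1 q.2

theorem exists_isUnit_mul_eq_mul_add_mul {A F : Matrix ι ι K} {C : Matrix κ ι K} {N : ℕ}
    (hobs : (of fun (q : Fin N × κ) j => (C * A ^ (q.1 : ℕ)) q.2 j).rank = Fintype.card ι)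
    (hF : minpoly K F = F.charpoly) :
    ∃ (T : Matrix ι ι K) (L : Matrix ι κ K), IsUnit T ∧ T * A = F * T + L * C := by
  obtain ⟨w, w_zero, hw, independent_w⟩ :=
    exists_linearIndependent_of_invtSubmodule_eq_top (φ := A.vecMulLinear)
      (fun _ => eq_top_of_rank_observability hobs)
      (Module.finrank_fintype_fun_eq_card K).ge
  choose! l hl using hw
  obtain ⟨f, independent_pow⟩ := exists_linearIndependent_pow_apply F.mulVecLin
  rw [← toLin'_apply', minpoly_toLin', hF, charpoly_natDegree_eq_dim] at independent_pow
  set n := Fintype.card ι with hn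
  have independent_rev : LinearIndependent K fun i : Fin n => w (n - i) := by
    have rev_eq : (fun i : Fin n => w (n - i)) = (fun i : Fin n => w (i + 1)) ∘ Fin.rev := by
      funext i
      exact congrArg w (by rw [Fin.val_rev]; omega)
    rw [rev_eq]
    exact independent_w.comp Fin.rev Fin.rev_injective
  obtain ⟨b, hb⟩ : ∃ b : ℕ → K, ∑ i ∈ Finset.range n, b i • w (n - i) = w n ᵥ* A := by
    have span_eq_top : Submodule.span K (Set.range fun i : Fin n => w (n - i)) = ⊤ :=
      independent_rev.span_eq_top_of_card_eq_finrank' (by simp [hn])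
    obtain ⟨c, hc⟩ := (Submodule.mem_span_range_iff_exists_fun K).1
      (span_eq_top ▸ Submodule.mem_top : w n ᵥ* A ∈ _)
    refine ⟨fun i => if h : i < n then c ⟨i, h⟩ else 0, ?_⟩
    simpa [Finset.sum_range] using hc
  have hwl (i : ℕ) (hi : i < n) : w (i + 1) = w i ᵥ* A + l i ᵥ* C :=
    sub_eq_iff_eq_add'.1 (hl i hi).symm
  have intertwining := sum_vecMulVec_hornerOrbit_mul (F := F) w_zero hwl hb f
  rw [sub_eq_add_neg, ← Matrix.neg_mul] at intertwining
  refine ⟨_, _, ?_, intertwining⟩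
  rw [Finset.sum_range]
  exact isUnit_sum_vecMulVec (linearIndependent_hornerOrbit independent_pow b) independent_rev
    (Fintype.card_fin n)

end Matrix

section LinearODE

open scoped Matrix.Norms.Operator

variable {ι : Type*}

lemma hasDerivAt_mulVec_of_entries {κ : Type*} [Fintype κ] {M : ℝ → Matrix ι κ ℝ}
    {M' : Matrix ι κ ℝ} {t : ℝ} (hM : ∀ i j, HasDerivAt (fun s => M s i j) (M' i j) t) (v : κ → ℝ) :
    HasDerivAt (fun s => M s *ᵥ v) (M' *ᵥ v) t :=
  hasDerivAt_pi.2 fun i => HasDerivAt.fun_sum fun j _ => (hM i j).mul_const (v j)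

variable [Fintype ι] [DecidableEq ι]

lemma hasDerivAt_exp_smul_mulVec (F : Matrix ι ι ℝ) (v : ι → ℝ) (t : ℝ) :
    HasDerivAt (fun s : ℝ => NormedSpace.exp (s • F) *ᵥ v)
      (F *ᵥ (NormedSpace.exp (t • F) *ᵥ v)) t := by
  have := (LinearMap.toContinuousLinearMap ((mulVecBilin ℝ ℝ).flip v)).hasFDerivAt.comp_hasDerivAt t
    (hasDerivAt_exp_smul_const' F t)
  rw [mulVec_mulVec]
  exact this

theorem eq_exp_smul_mulVec_of_hasDerivAt {F : Matrix ι ι ℝ} {e : ℝ → ι → ℝ}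
    (he : ∀ t, 0 ≤ t → HasDerivAt e (F *ᵥ e t) t) {t : ℝ} (ht : 0 ≤ t) :
    e t = NormedSpace.exp (t • F) *ᵥ e 0 :=
  ODE_solution_unique (v := fun _ => F.mulVecLin.toContinuousLinearMap)
    (fun _ => F.mulVecLin.toContinuousLinearMap.lipschitz)
    (HasDerivAt.continuousOn fun s hs => he s hs.1)
    (fun s hs => (he s hs.1).hasDerivWithinAt)
    (HasDerivAt.continuousOn fun s _ => hasDerivAt_exp_smul_mulVec F (e 0) s)
    (fun s _ => (hasDerivAt_exp_smul_mulVec F (e 0) s).hasDerivWithinAt)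
    (by simp) ⟨ht, le_rfl⟩

end LinearODE

section Kreisselmeier

variable {n : ℕ} {κ : Type*} [Fintype κ]

lemma rowKron_mulVec_mvec (v : κ → ℝ) (S : Matrix (Fin n) (Fin n) ℝ) (Y : Matrix (Fin n) κ ℝ) :
    rowKron v S *ᵥ mvec Y = S *ᵥ (Y *ᵥ v) := by
  ext i
  simp only [mulVec, dotProduct, rowKron, mvec, submatrix_apply, kroneckerMap_apply, of_apply, id,
    Fintype.sum_prod_type, Finset.mul_sum]
  rw [Finset.sum_comm]
  exact Finset.sum_congr rfl fun j _ => Finset.sum_congr rfl fun k _ => by ring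

lemma regressor_mulVec_sumElim_mvec {m p : ℕ} (y : Fin p → ℝ) (u : Fin m → ℝ)
    (L : Matrix (Fin n) (Fin p) ℝ) (N : Matrix (Fin n) (Fin m) ℝ) :
    regressor n y u *ᵥ Sum.elim (mvec L) (mvec N) = L *ᵥ y + N *ᵥ u := by
  rw [regressor, fromCols_mulVec_sumElim, rowKron_mulVec_mvec, rowKron_mulVec_mvec, one_mulVec,
    one_mulVec]

lemma hasDerivAt_filter_error {m p : ℕ} {A F T : Matrix (Fin n) (Fin n) ℝ}
    {B : Matrix (Fin n) (Fin m) ℝ} {C : Matrix (Fin p) (Fin n) ℝ} {L : Matrix (Fin n) (Fin p) ℝ}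
    (hT : T * A = F * T + L * C) {u : Fin m → ℝ} {x : ℝ → Fin n → ℝ}
    {M : ℝ → Matrix (Fin n) (Kix n m p) ℝ} {t : ℝ}
    (hx : ∀ i, HasDerivAt (fun s => x s i) ((A *ᵥ x t + B *ᵥ u) i) t)
    (hM : ∀ i j, HasDerivAt (fun s => M s i j) ((F * M t + regressor n (C *ᵥ x t) u) i j) t) :
    HasDerivAt (fun s => T *ᵥ x s - M s *ᵥ Sum.elim (mvec L) (mvec (T * B)))
      (F *ᵥ (T *ᵥ x t - M t *ᵥ Sum.elim (mvec L) (mvec (T * B)))) t := by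
  have hTx : HasDerivAt (fun s => T *ᵥ x s) (T *ᵥ (A *ᵥ x t + B *ᵥ u)) t :=
    T.mulVecLin.toContinuousLinearMap.hasFDerivAt.comp_hasDerivAt t (hasDerivAt_pi.2 hx)
  refine (hTx.sub (hasDerivAt_mulVec_of_entries hM _)).congr_deriv ?_
  rw [add_mulVec, regressor_mulVec_sumElim_mvec, mulVec_add, mulVec_sub]
  simp only [mulVec_mulVec, hT, add_mulVec]
  abel

end Kreisselmeier

theorem stmt0_general {n m p : ℕ}
    (A : Matrix (Fin n) (Fin n) ℝ) (B : Matrix (Fin n) (Fin m) ℝ) (C : Matrix (Fin p) (Fin n) ℝ)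
    (hobs : (of fun (q : Fin n × Fin p) j => (C * A ^ (q.1 : ℕ)) q.2 j).rank = n)
    (F : Matrix (Fin n) (Fin n) ℝ) (hF : minpoly ℝ F = F.charpoly) :
    ∃ (T : Matrix (Fin n) (Fin n) ℝ) (θ : Kix n m p → ℝ), IsUnit T ∧
      ∀ (u : ℝ → Fin m → ℝ) (x : ℝ → Fin n → ℝ) (M : ℝ → Matrix (Fin n) (Kix n m p) ℝ),
        (∀ t, 0 ≤ t → ∀ i, HasDerivAt (fun s => x s i) ((A *ᵥ x t + B *ᵥ u t) i) t) →
        (∀ t, 0 ≤ t → ∀ i j, HasDerivAt (fun s => M s i j)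
          ((F * M t + regressor n (C *ᵥ x t) (u t)) i j) t) →
        ∀ t, 0 ≤ t →
          T *ᵥ x t = M t *ᵥ θ + NormedSpace.exp (t • F) *ᵥ (T *ᵥ x 0 - M 0 *ᵥ θ) := by
  obtain ⟨T, L, isUnit_T, hT⟩ :=
    exists_isUnit_mul_eq_mul_add_mul (hobs.trans (Fintype.card_fin n).symm) hF
  refine ⟨T, Sum.elim (mvec L) (mvec (T * B)), isUnit_T, fun u x M hx hM t ht => ?_⟩
  rw [← sub_eq_iff_eq_add']
  exact eq_exp_smul_mulVec_of_hasDerivAt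
    (fun s hs => hasDerivAt_filter_error hT (hx s hs) (hM s hs)) ht

/-- Lemma 1 in the paper, Kreisselmeier's filter relation.
If `(C, A)` is observable and `F` is Hurwitz with `n` distinct eigenvalues, then there
exist an invertible `T` and `θ ∈ ℝ^{(p+m)n}` such that for every trajectory of the plant
`x' = Ax + Bu`, `y = Cx` and of the filter `M' = FM + [yᵀ ⊗ Iₙ, uᵀ ⊗ Iₙ]`, one has
`T x(t) = M(t) θ + exp(Ft) (T x(0) − M(0) θ)` for all `t ≥ 0`. -/
theorem stmt0 {n m p : ℕ}
    (A : Matrix (Fin n) (Fin n) ℝ) (B : Matrix (Fin n) (Fin m) ℝ)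
    (C : Matrix (Fin p) (Fin n) ℝ)
    (hobs : (Matrix.of fun q : Fin n × Fin p => fun j : Fin n =>
      (C * A ^ (q.1 : ℕ)) q.2 j).rank = n)
    (F : Matrix (Fin n) (Fin n) ℝ) (hHur : IsHurwitz F)
    (hdist : ((F.map (Complex.ofReal : ℝ → ℂ)).charpoly.roots).Nodup) :
    ∃ (T : Matrix (Fin n) (Fin n) ℝ) (θ : Kix n m p → ℝ), IsUnit T ∧
      ∀ (u : ℝ → Fin m → ℝ) (x : ℝ → Fin n → ℝ) (M : ℝ → Matrix (Fin n) (Kix n m p) ℝ),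
        (∀ t, 0 ≤ t → ∀ i, HasDerivAt (fun s => x s i)
            ((A.mulVec (x t) + B.mulVec (u t)) i) t) →
        (∀ t, 0 ≤ t → ∀ i j, HasDerivAt (fun s => M s i j)
            ((F * M t + regressor n (C.mulVec (x t)) (u t)) i j) t) →
        ∀ t, 0 ≤ t →
          T.mulVec (x t) = (M t).mulVec θ +
            (NormedSpace.exp (t • F)).mulVec (T.mulVec (x 0) - (M 0).mulVec θ) :=
  stmt0_general A B C hobs F <| minpoly_eq_charpoly_of_separable F <|
    charpoly_separable_of_nodup_roots_map Complex.ofRealHom hdist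
end

section
/- Let A ∈ ℝ^{n×n}, B ∈ ℝ^{n×m}, C ∈ ℝ^{p×n}, μ := (p+m)·n, F ∈ ℝ^{n×n}, L ∈ ℝ^{n×p}, and let T ∈ ℝ^{n×n} be invertible with F·T = T·(A − L·C). Define θ := [vec(T·L); vec(T·B)] ∈ ℝ^{μ}, Π := θ^⊤ ⊗ T^{−1} ∈ ℝ^{n×nμ}, F_ξ := I_μ ⊗ F, B_ξ := [0_{pn²×m}; I_m ⊗ vec(I_n)], L_ξ := [I_p ⊗ vec(I_n); 0_{mn²×p}], C_ξ := C·Π, and A_ξ := F_ξ + L_ξ·C_ξ. Then the non-minimal realization equations hold: Π·F_ξ = (A − L·C)·Π, Π·L_ξ = L, Π·B_ξ = B, and consequently Π·A_ξ = A·Π. -/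
open Matrix Filter
open scoped Kronecker

/-!
For a row vector `θᵀ`, the matrix `θᵀ ⊗ S` satisfies `(θᵀ ⊗ S)(I ⊗ G) = θᵀ ⊗ SG` and
`G(θᵀ ⊗ S) = θᵀ ⊗ GS`, so the similarity `T⁻¹F = (A - LC)T⁻¹` lifts to `ΠF_ξ = (A - LC)Π`.
Moreover `(vec(X)ᵀ ⊗ S)(I ⊗ vec(I_n)) = SX`, which for `S = T⁻¹` and `X = TL`, `X = TB` gives
`ΠL_ξ = L` and `ΠB_ξ = B`. Adding `ΠL_ξCΠ = LCΠ` to the first identity yields `ΠA_ξ = AΠ`.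
-/

/-- The matrix `I_K ⊗ vec(I_n)`. Its row index `((j, c), r)` is the column index of
`rowKron (mvec X) S`: `j` comes from `I_K`, and `(c, r)` is the (column, row) index of
`vec(I_n)`. It is the nonzero block of both `Lxi` and `Bxi`. -/
def oneKronVecOne (K : Type*) [DecidableEq K] (n : ℕ) : Matrix ((K × Fin n) × Fin n) K ℝ :=
  Matrix.of fun q j => (1 : Matrix K K ℝ) q.1.1 j * (1 : Matrix (Fin n) (Fin n) ℝ) q.1.2 q.2

section RowKron

variable {n : ℕ} {K K' ι : Type*}

lemma rowKron_apply (θ : K → ℝ) (S : Matrix (Fin n) (Fin n) ℝ) (i : Fin n) (q : K × Fin n) :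
    rowKron θ S i q = θ q.1 * S i q.2 :=
  rfl

lemma mul_rowKron (θ : K → ℝ) (G S : Matrix (Fin n) (Fin n) ℝ) :
    G * rowKron θ S = rowKron θ (G * S) := by
  ext i q
  simp only [mul_apply, rowKron_apply, Finset.mul_sum, mul_left_comm]

lemma rowKron_mul_one_kronecker [Fintype K] [DecidableEq K] (θ : K → ℝ)
    (S G : Matrix (Fin n) (Fin n) ℝ) :
    rowKron θ S * ((1 : Matrix K K ℝ) ⊗ₖ G) = rowKron θ (S * G) := by
  ext i ⟨k, a⟩
  simp [mul_apply, rowKron_apply, kroneckerMap_apply, Fintype.sum_prod_type_right, one_apply,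
    Finset.mul_sum, mul_assoc]

lemma rowKron_sumElim_mul [Fintype K] [Fintype K'] (θ : K → ℝ) (θ' : K' → ℝ)
    (S : Matrix (Fin n) (Fin n) ℝ) (M : Matrix ((K ⊕ K') × Fin n) ι ℝ) :
    rowKron (Sum.elim θ θ') S * M =
      rowKron θ S * M.submatrix (Prod.map Sum.inl id) id +
        rowKron θ' S * M.submatrix (Prod.map Sum.inr id) id := by
  ext i j
  simp [mul_apply, rowKron_apply, Fintype.sum_prod_type]

lemma rowKron_mvec_mul_oneKronVecOne [Fintype K] [DecidableEq K] (X : Matrix (Fin n) K ℝ)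
    (S : Matrix (Fin n) (Fin n) ℝ) :
    rowKron (mvec X) S * oneKronVecOne K n = S * X := by
  ext i j
  simp [mul_apply, rowKron_apply, mvec, oneKronVecOne, Fintype.sum_prod_type, one_apply,
    mul_comm]

end RowKron

section Realization

variable {n m p : ℕ} (X : Matrix (Fin n) (Fin p) ℝ) (Y : Matrix (Fin n) (Fin m) ℝ)
  (S : Matrix (Fin n) (Fin n) ℝ)

lemma rowKron_mul_Lxi : rowKron (Sum.elim (mvec X) (mvec Y)) S * Lxi n m p = S * X := by
  have top_block :
      (Lxi n m p).submatrix (Prod.map Sum.inl id) id = oneKronVecOne (Fin p) n := rfl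
  have bottom_block : (Lxi n m p).submatrix (Prod.map Sum.inr id) id = 0 := rfl
  rw [rowKron_sumElim_mul, top_block, bottom_block, rowKron_mvec_mul_oneKronVecOne,
    Matrix.mul_zero, add_zero]

lemma rowKron_mul_Bxi : rowKron (Sum.elim (mvec X) (mvec Y)) S * Bxi n m p = S * Y := by
  have top_block : (Bxi n m p).submatrix (Prod.map Sum.inl id) id = 0 := rfl
  have bottom_block :
      (Bxi n m p).submatrix (Prod.map Sum.inr id) id = oneKronVecOne (Fin m) n := rfl
  rw [rowKron_sumElim_mul, top_block, bottom_block, rowKron_mvec_mul_oneKronVecOne,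
    Matrix.mul_zero, zero_add]

end Realization

lemma semiconjBy_nonsing_inv {ι R : Type*} [Fintype ι] [DecidableEq ι] [CommRing R]
    {T G F : Matrix ι ι R} (hT : IsUnit T) (h : SemiconjBy T G F) : SemiconjBy T⁻¹ F G := by
  obtain ⟨U, rfl⟩ := hT
  rw [← coe_units_inv]
  exact h.units_inv_symm_left

/-- the non-minimal realization equations, cf. Lemma 3.
With `θ := [vec(T·L); vec(T·B)]`, `Pim := θᵀ ⊗ T⁻¹`, `F_ξ := I_μ ⊗ F`,
`C_ξ := C·Pim`, `A_ξ := F_ξ + L_ξ·C_ξ`, one has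
`Pim·F_ξ = (A − L·C)·Pim`, `Pim·L_ξ = L`, `Pim·B_ξ = B` and `Pim·A_ξ = A·Pim`. -/
theorem stmt6 {n m p : ℕ}
    (A : Matrix (Fin n) (Fin n) ℝ) (B : Matrix (Fin n) (Fin m) ℝ)
    (C : Matrix (Fin p) (Fin n) ℝ)
    (F : Matrix (Fin n) (Fin n) ℝ) (L : Matrix (Fin n) (Fin p) ℝ)
    (T : Matrix (Fin n) (Fin n) ℝ) (hT : IsUnit T)
    (hFT : F * T = T * (A - L * C))
    (θ : Kix n m p → ℝ) (hθ : θ = Sum.elim (mvec (T * L)) (mvec (T * B)))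
    (Pim : Matrix (Fin n) (Kix n m p × Fin n) ℝ) (hPim : Pim = rowKron θ T⁻¹)
    (Cξ : Matrix (Fin p) (Kix n m p × Fin n) ℝ) (hCξ : Cξ = C * Pim)
    (Aξ : Matrix (Kix n m p × Fin n) (Kix n m p × Fin n) ℝ)
    (hAξ : Aξ = Fxi F + Lxi n m p * Cξ) :
    Pim * Fxi F = (A - L * C) * Pim ∧
    Pim * Lxi n m p = L ∧
    Pim * Bxi n m p = B ∧
    Pim * Aξ = A * Pim := by
  have hdet : IsUnit T.det := (isUnit_iff_isUnit_det T).mp hT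
  have inv_intertwines : T⁻¹ * F = (A - L * C) * T⁻¹ := semiconjBy_nonsing_inv hT hFT.symm
  -- With `m` and `p` left implicit, elaboration picks the product of `CStarMatrix`, which is equal
  -- to that of `Matrix` only by unfolding and blocks `rw`.
  have pi_mul_F : Pim * Fxi (m := m) (p := p) F = (A - L * C) * Pim := by
    rw [hPim, Fxi, rowKron_mul_one_kronecker, inv_intertwines, mul_rowKron]
  have pi_mul_L : Pim * Lxi n m p = L := by
    rw [hPim, hθ, rowKron_mul_Lxi, nonsing_inv_mul_cancel_left T L hdet]
  have pi_mul_B : Pim * Bxi n m p = B := by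
    rw [hPim, hθ, rowKron_mul_Bxi, nonsing_inv_mul_cancel_left T B hdet]
  refine ⟨pi_mul_F, pi_mul_L, pi_mul_B, ?_⟩
  calc Pim * Aξ = Pim * Fxi (m := m) (p := p) F + Pim * Lxi n m p * (C * Pim) := by
        rw [hAξ, hCξ, Matrix.mul_add, Matrix.mul_assoc Pim (Lxi n m p)]
    _ = (A - L * C) * Pim + L * (C * Pim) := by rw [pi_mul_F, pi_mul_L]
    _ = A * Pim := by rw [Matrix.sub_mul, Matrix.mul_assoc, sub_add_cancel]
end

section
/- Let A_e ∈ ℝ^{q×q} and B_e ∈ ℝ^{q×m} with the pair (A_e, B_e) stabilizable. Let t_D > 0, let u : [0, t_D] → ℝ^m, and let z : [0, t_D] → ℝ^q be absolutely continuous with z'(t) = A_e·z(t) + B_e·u(t) for almost every t ∈ [0, t_D]. Define 𝒵 := ∫₀^{t_D} z(s)·z(s)^⊤ ds ∈ ℝ^{q×q} and the reachability matrix ℛ := [B_e, A_e·B_e, …, A_e^{q−1}·B_e], and assume Im ℛ ⊆ Im 𝒵 (column spaces). Let l := rank 𝒵 with l < q, and let T_z ∈ ℝ^{q×q} be orthogonal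 such that T_z·𝒵·T_z^⊤ = [[Σ₀, 0], [0, 0]] with Σ₀ ∈ ℝ^{l×l} positive definite. Partition T_z·A_e·T_z^⊤ = [[A_a, A_ab], [A_ba, A_b]] and T_z·B_e = [B_a; B_b] with A_a ∈ ℝ^{l×l}, A_b ∈ ℝ^{(q−l)×(q−l)}, B_a ∈ ℝ^{l×m}. Then A_ba = 0, B_b = 0, and A_b is Hurwitz. -/
open Matrix Filter
open scoped Kronecker

/-!
Let `W` be the lower block row of `T`. The lower right block of `T 𝒵 Tᵀ` is the Gramian of `W z`,
so its vanishing forces `W z = 0` on the whole interval, hence `W 𝒵 = 0`, and `Im B ⊆ Im 𝒵` gives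
`B_b = W B = 0`. Differentiating `W z = 0` along the dynamics leaves `W A z = 0`, and therefore
`W A 𝒵 Tᵀ = 0`, whose first block is `A_ba Σ₀`. Now `W A = A_b W` and `W B = 0`, so a left
eigenvector `v` of `A_b` lifts to the left eigenvector `v W` of `A` annihilating `B`; by the PBH
test its eigenvalue has negative real part.
-/

section MatrixAlgebra

variable {K m n k p : Type*} [Fintype m] [Fintype n]

theorem vecMul_injective_of_rank_eq_card [Field K] {M : Matrix m n K}
    (hM : M.rank = Fintype.card m) : Function.Injective fun v => v ᵥ* M := by
  rw [Matrix.vecMul_injective_iff, linearIndependent_iff_card_eq_finrank_span, ← hM,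
    Matrix.rank_eq_finrank_span_row]
  rfl

theorem exists_vecMul_eq_smul_of_mem_spectrum [Field K] [DecidableEq n] {M : Matrix n n K} {c : K}
    (hc : c ∈ spectrum K M) : ∃ v ≠ 0, v ᵥ* M = c • v := by
  rw [spectrum.mem_iff, Matrix.isUnit_iff_isUnit_det, isUnit_iff_ne_zero, not_not] at hc
  obtain ⟨v, hv_ne, hv⟩ := Matrix.exists_vecMul_eq_zero_iff.2 hc
  refine ⟨v, hv_ne, ?_⟩
  rw [Matrix.vecMul_sub, Algebra.algebraMap_eq_smul_one, Matrix.vecMul_smul, Matrix.vecMul_one,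
    sub_eq_zero] at hv
  exact hv.symm

theorem map_ofReal_mul (M : Matrix k n ℝ) (N : Matrix n p ℝ) :
    (M * N).map Complex.ofReal = M.map Complex.ofReal * N.map Complex.ofReal :=
  Matrix.map_mul (f := Complex.ofRealHom)

theorem mul_eq_zero_of_range_mulVecLin_le [CommSemiring K] [Fintype p] {W : Matrix k m K}
    {M : Matrix m n K} {N : Matrix m p K}
    (hNM : LinearMap.range N.mulVecLin ≤ LinearMap.range M.mulVecLin) (hWM : W * M = 0) :
    W * N = 0 := by
  have hM : LinearMap.range M.mulVecLin ≤ LinearMap.ker W.mulVecLin := by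
    rw [LinearMap.range_le_ker_iff, ← Matrix.mulVecLin_mul, hWM, Matrix.mulVecLin_zero]
  have hN := LinearMap.range_le_ker_iff.1 (hNM.trans hM)
  rw [← Matrix.mulVecLin_mul] at hN
  exact Matrix.ext_iff_mulVec.2 fun v => by simpa using LinearMap.congr_fun hN v

end MatrixAlgebra

section Stabilizability

variable {q m k : Type*} [Fintype q] [DecidableEq q] [Fintype m] [Fintype k] [DecidableEq k]
  {A : Matrix q q ℝ} {B : Matrix q m ℝ}

theorem IsStabilizable.eq_zero_of_vecMul_eq_smul (hAB : IsStabilizable A B) {c : ℂ}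
    (hc : 0 ≤ c.re) {x : q → ℂ} (hxA : x ᵥ* A.map Complex.ofReal = c • x)
    (hxB : x ᵥ* B.map Complex.ofReal = 0) : x = 0 := by
  apply vecMul_injective_of_rank_eq_card (hAB c hc)
  simp only [Matrix.vecMul_fromCols, Matrix.vecMul_sub, Matrix.vecMul_smul, Matrix.vecMul_one,
    hxA, hxB, sub_self, Matrix.zero_vecMul, Sum.elim_zero_zero]

theorem IsStabilizable.isHurwitz_of_mul_eq_mul (hAB : IsStabilizable A B) {C : Matrix k k ℝ}
    {W : Matrix k q ℝ} {Q : Matrix q k ℝ} (hWQ : W * Q = 1) (hWA : W * A = C * W)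
    (hWB : W * B = 0) : IsHurwitz C := by
  intro c hc
  by_contra! hre
  obtain ⟨v, hv_ne, hv⟩ := exists_vecMul_eq_smul_of_mem_spectrum hc
  have lift_eq_zero : v ᵥ* W.map Complex.ofReal = 0 := by
    apply hAB.eq_zero_of_vecMul_eq_smul hre
    · rw [Matrix.vecMul_vecMul, ← map_ofReal_mul, hWA, map_ofReal_mul, ← Matrix.vecMul_vecMul, hv,
        Matrix.smul_vecMul]
    · rw [Matrix.vecMul_vecMul, ← map_ofReal_mul, hWB, Matrix.map_zero _ Complex.ofReal_zero,
        Matrix.vecMul_zero]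
  apply hv_ne
  calc
    v = v ᵥ* (W * Q).map Complex.ofReal := by simp [hWQ]
    _ = (v ᵥ* W.map Complex.ofReal) ᵥ* Q.map Complex.ofReal := by
      rw [map_ofReal_mul, Matrix.vecMul_vecMul]
    _ = 0 := by rw [lift_eq_zero, Matrix.zero_vecMul]

end Stabilizability

/-- The truncated reachability matrix `[B, A B, …, A ^ (N - 1) B]`; the column with index `(i, j)`
is column `j` of `A ^ i * B`. -/
def reachabilityMatrix {K q m : Type*} [Semiring K] [Fintype q] [DecidableEq q] (A : Matrix q q K)
    (B : Matrix q m K) (N : ℕ) : Matrix q (Fin N × m) K :=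
  Matrix.of fun i w => (A ^ (w.1 : ℕ) * B) i w.2

theorem range_mulVecLin_le_range_reachabilityMatrix {K q m : Type*} [CommSemiring K] [Fintype q]
    [DecidableEq q] [Fintype m] (A : Matrix q q K) (B : Matrix q m K) (N : ℕ) [NeZero N] :
    LinearMap.range B.mulVecLin ≤ LinearMap.range (reachabilityMatrix A B N).mulVecLin := by
  rw [Matrix.range_mulVecLin, Matrix.range_mulVecLin]
  refine Submodule.span_mono (Set.range_subset_iff.2 fun j => ⟨(0, j), ?_⟩)
  ext i
  simp [reachabilityMatrix]

section CrossGramian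

variable {ι κ μ : Type*} {a b : ℝ}

/-- The cross-Gramian `∫ x yᵀ` of two vector-valued signals over `[a, b]`, integrated entrywise.
For `y = x` it is the Gramian of `x`, the matrix `𝒵` of the main theorem. -/
noncomputable def crossGramian (x : ℝ → ι → ℝ) (y : ℝ → κ → ℝ) (a b : ℝ) : Matrix ι κ ℝ :=
  Matrix.of fun i j => ∫ s in a..b, x s i * y s j

theorem transpose_crossGramian (x : ℝ → ι → ℝ) (y : ℝ → κ → ℝ) :
    (crossGramian x y a b)ᵀ = crossGramian y x a b := by
  ext i j
  simp only [crossGramian, Matrix.transpose_apply, Matrix.of_apply, mul_comm]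

theorem mul_crossGramian [Fintype ι] {x : ℝ → ι → ℝ} {y : ℝ → κ → ℝ} (hab : a ≤ b)
    (hx : ContinuousOn x (Set.Icc a b)) (hy : ContinuousOn y (Set.Icc a b)) (W : Matrix μ ι ℝ) :
    W * crossGramian x y a b = crossGramian (fun s => W *ᵥ x s) y a b := by
  ext i j
  have hint (k : ι) :
      IntervalIntegrable (fun s => W i k * x s k * y s j) MeasureTheory.volume a b :=
    ContinuousOn.intervalIntegrable_of_Icc hab (by fun_prop)
  simp only [crossGramian, Matrix.mul_apply, Matrix.of_apply, Matrix.mulVec, dotProduct,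
    Finset.sum_mul]
  rw [intervalIntegral.integral_finsetSum fun k _ => hint k]
  simp only [mul_assoc, intervalIntegral.integral_const_mul]

theorem crossGramian_mul_transpose [Fintype κ] {x : ℝ → ι → ℝ} {y : ℝ → κ → ℝ} (hab : a ≤ b)
    (hx : ContinuousOn x (Set.Icc a b)) (hy : ContinuousOn y (Set.Icc a b)) (W : Matrix μ κ ℝ) :
    crossGramian x y a b * Wᵀ = crossGramian x (fun s => W *ᵥ y s) a b := by
  rw [← transpose_crossGramian, ← Matrix.transpose_mul, mul_crossGramian hab hy hx,
    transpose_crossGramian]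

theorem crossGramian_eq_zero_of_left {x : ℝ → ι → ℝ} (hab : a ≤ b)
    (hx : ∀ t ∈ Set.Icc a b, x t = 0) (y : ℝ → κ → ℝ) : crossGramian x y a b = 0 := by
  ext i j
  refine intervalIntegral.integral_zero_ae (.of_forall fun s hs => ?_)
  rw [Set.uIoc_of_le hab] at hs
  rw [hx s (Set.Ioc_subset_Icc_self hs), Pi.zero_apply, zero_mul]

theorem eq_zero_of_crossGramian_self_eq_zero {x : ℝ → ι → ℝ} (hab : a < b)
    (hx : ContinuousOn x (Set.Icc a b)) (h : crossGramian x x a b = 0) :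
    ∀ t ∈ Set.Icc a b, x t = 0 := by
  intro t ht
  ext i
  by_contra hne
  have hpos : 0 < ∫ s in a..b, x s i * x s i :=
    intervalIntegral.integral_pos hab (by fun_prop) (fun s _ => mul_self_nonneg _)
      ⟨t, ht, mul_self_pos.2 hne⟩
  exact hpos.ne' (congrFun₂ h i i)

theorem mul_crossGramian_self_mul_transpose [Fintype ι] {x : ℝ → ι → ℝ} (hab : a ≤ b)
    (hx : ContinuousOn x (Set.Icc a b)) (W : Matrix μ ι ℝ) :
    W * crossGramian x x a b * Wᵀ = crossGramian (fun s => W *ᵥ x s) (fun s => W *ᵥ x s) a b := by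
  rw [mul_crossGramian hab hx hx, crossGramian_mul_transpose hab (by fun_prop) hx]

theorem mul_crossGramian_self_eq_zero_iff [Fintype ι] {x : ℝ → ι → ℝ} (hab : a < b)
    (hx : ContinuousOn x (Set.Icc a b)) (W : Matrix μ ι ℝ) :
    W * crossGramian x x a b = 0 ↔ ∀ t ∈ Set.Icc a b, W *ᵥ x t = 0 := by
  constructor
  · intro h
    refine eq_zero_of_crossGramian_self_eq_zero hab (by fun_prop) ?_
    rw [← mul_crossGramian_self_mul_transpose hab.le hx, h, Matrix.zero_mul]
  · intro h
    rw [mul_crossGramian hab.le hx hx, crossGramian_eq_zero_of_left hab.le h]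

theorem mul_crossGramian_self_mul_transpose_eq_zero_iff [Fintype ι] {x : ℝ → ι → ℝ} (hab : a < b)
    (hx : ContinuousOn x (Set.Icc a b)) (W : Matrix μ ι ℝ) :
    W * crossGramian x x a b * Wᵀ = 0 ↔ W * crossGramian x x a b = 0 := by
  refine ⟨fun h => ?_, fun h => by rw [h, Matrix.zero_mul]⟩
  rw [mul_crossGramian_self_mul_transpose hab.le hx] at h
  rw [mul_crossGramian_self_eq_zero_iff hab hx]
  exact eq_zero_of_crossGramian_self_eq_zero hab (by fun_prop) h

end CrossGramian

theorem eq_zero_of_forall_integral_eq_zero {E : Type*} [NormedAddCommGroup E] [NormedSpace ℝ E]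
    [CompleteSpace E] {f : ℝ → E} {a b : ℝ} (hab : a < b) (hf : ContinuousOn f (Set.Icc a b))
    (hint : ∀ t ∈ Set.Icc a b, ∫ s in a..t, f s = 0) : ∀ t ∈ Set.Icc a b, f t = 0 := by
  intro t ht
  have : Fact (t ∈ Set.Icc a b) := ⟨ht⟩
  have hderiv : HasDerivWithinAt (fun r => ∫ s in a..r, f s) (f t) (Set.Icc a b) t :=
    intervalIntegral.integral_hasDerivWithinAt_right
      ((hf.mono (Set.Icc_subset_Icc_right ht.2)).intervalIntegrable_of_Icc ht.1)
      (hf.stronglyMeasurableAtFilter_nhdsWithin measurableSet_Icc t) (hf t ht)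
  have hderiv_zero : HasDerivWithinAt (fun r => ∫ s in a..r, f s) 0 (Set.Icc a b) t :=
    (hasDerivWithinAt_const t _ 0).congr hint (hint t ht)
  exact (uniqueDiffOn_Icc hab t ht).eq_deriv _ hderiv hderiv_zero

/-- `z` is a trajectory on `[a, b]` of `z' = A z + B u`. Absolute continuity together with the
differential equation almost everywhere is encoded as the integral equation with integrable
right-hand side. -/
structure IsTrajectory {q m : Type*} [Fintype q] [Fintype m] (A : Matrix q q ℝ) (B : Matrix q m ℝ)
    (u : ℝ → m → ℝ) (z : ℝ → q → ℝ) (a b : ℝ) : Prop where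
  intervalIntegrable :
    IntervalIntegrable (fun s => A *ᵥ z s + B *ᵥ u s) MeasureTheory.volume a b
  eq_add_integral : ∀ t ∈ Set.Icc a b, z t = z a + ∫ s in a..t, (A *ᵥ z s + B *ᵥ u s)

namespace IsTrajectory

variable {q m k : Type*} [Fintype q] [Fintype m] {A : Matrix q q ℝ} {B : Matrix q m ℝ}
  {u : ℝ → m → ℝ} {z : ℝ → q → ℝ} {a b : ℝ}

theorem continuousOn (hz : IsTrajectory A B u z a b) : ContinuousOn z (Set.Icc a b) := by
  have hprim := intervalIntegral.continuousOn_primitive_interval' hz.intervalIntegrable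
    Set.left_mem_uIcc
  exact ((continuousOn_const.add hprim).mono Set.Icc_subset_uIcc).congr hz.eq_add_integral

theorem mulVec_eq_add_integral [Fintype k] (hz : IsTrajectory A B u z a b) (W : Matrix k q ℝ)
    {t : ℝ} (ht : t ∈ Set.Icc a b) :
    W *ᵥ z t = W *ᵥ z a + ∫ s in a..t, ((W * A) *ᵥ z s + (W * B) *ᵥ u s) := by
  have hint : IntervalIntegrable (fun s => A *ᵥ z s + B *ᵥ u s) MeasureTheory.volume a t :=
    hz.intervalIntegrable.mono_set
      (Set.uIcc_subset_uIcc_left (Set.Icc_subset_uIcc ht))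
  have hcomm := W.mulVecLin.toContinuousLinearMap.intervalIntegral_comp_comm hint
  simp only [LinearMap.coe_toContinuousLinearMap', Matrix.mulVecLin_apply, Matrix.mulVec_add,
    Matrix.mulVec_mulVec] at hcomm
  rw [hcomm, ← Matrix.mulVec_add, ← hz.eq_add_integral t ht]

theorem mul_mulVec_eq_zero [Finite k] (hz : IsTrajectory A B u z a b) (hab : a < b)
    {W : Matrix k q ℝ} (hWB : W * B = 0) (hWz : ∀ t ∈ Set.Icc a b, W *ᵥ z t = 0) :
    ∀ t ∈ Set.Icc a b, (W * A) *ᵥ z t = 0 := by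
  have := Fintype.ofFinite k
  have hcont := hz.continuousOn
  refine eq_zero_of_forall_integral_eq_zero hab (by fun_prop) fun t ht => ?_
  simpa [hWB, hWz t ht, hWz a (Set.left_mem_Icc.2 hab.le)] using
    (hz.mulVec_eq_add_integral W ht).symm

theorem mul_mul_crossGramian_eq_zero [Finite k] (hz : IsTrajectory A B u z a b) (hab : a < b)
    {W : Matrix k q ℝ} (hWB : W * B = 0) (hWZ : W * crossGramian z z a b = 0) :
    W * A * crossGramian z z a b = 0 := by
  rw [mul_crossGramian_self_eq_zero_iff hab hz.continuousOn] at hWZ ⊢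
  exact hz.mul_mulVec_eq_zero hab hWB hWZ

end IsTrajectory

theorem stmt14_general {q m k l : Type*} [Fintype q] [DecidableEq q] [Fintype m]
    [Fintype k] [DecidableEq k] [Fintype l] [DecidableEq l]
    {A : Matrix q q ℝ} {B : Matrix q m ℝ} (hstab : IsStabilizable A B)
    {a b : ℝ} (hab : a < b) {u : ℝ → m → ℝ} {z : ℝ → q → ℝ} (hz : IsTrajectory A B u z a b)
    (hB : LinearMap.range B.mulVecLin ≤ LinearMap.range (crossGramian z z a b).mulVecLin)
    {T : Matrix (l ⊕ k) q ℝ} {S : Matrix q (l ⊕ k) ℝ} (hTS : T * S = 1) (hST : S * T = 1)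
    {Sig₀ : Matrix l l ℝ} (hSig₀ : IsUnit Sig₀)
    (hZdec : T * crossGramian z z a b * Tᵀ = Matrix.fromBlocks Sig₀ 0 0 0)
    {Aa : Matrix l l ℝ} {Aab : Matrix l k ℝ} {Aba : Matrix k l ℝ} {Ab : Matrix k k ℝ}
    (hAdec : T * A * S = Matrix.fromBlocks Aa Aab Aba Ab)
    {Ba : Matrix l m ℝ} {Bb : Matrix k m ℝ} (hBdec : T * B = Matrix.fromRows Ba Bb) :
    Aba = 0 ∧ Bb = 0 ∧ IsHurwitz Ab := by
  obtain ⟨V, W, rfl⟩ : ∃ V W, T = Matrix.fromRows V W := ⟨_, _, (T.fromRows_toRows).symm⟩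
  obtain ⟨P, Q, rfl⟩ : ∃ P Q, S = Matrix.fromCols P Q := ⟨_, _, (S.fromCols_toCols).symm⟩
  simp only [Matrix.transpose_fromRows, Matrix.fromRows_mul, Matrix.mul_fromCols,
    Matrix.fromCols_fromRows_eq_fromBlocks, ← Matrix.fromBlocks_one, Matrix.fromBlocks_inj]
    at hTS hZdec hAdec
  rw [Matrix.fromCols_mul_fromRows] at hST
  rw [Matrix.fromRows_mul, Matrix.fromRows_ext_iff] at hBdec
  obtain ⟨-, -, -, hWQ⟩ := hTS
  obtain ⟨hVZV, -, -, hWZW⟩ := hZdec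
  obtain ⟨-, -, hWAP, hWAQ⟩ := hAdec
  have hWZ : W * crossGramian z z a b = 0 :=
    (mul_crossGramian_self_mul_transpose_eq_zero_iff hab hz.continuousOn W).1 hWZW
  have hWB : W * B = 0 := mul_eq_zero_of_range_mulVecLin_le hB hWZ
  have hWAZ : W * A * crossGramian z z a b = 0 := hz.mul_mul_crossGramian_eq_zero hab hWB hWZ
  have hWA : W * A = Aba * V + Ab * W := by
    rw [← hWAP, ← hWAQ, Matrix.mul_assoc _ P, Matrix.mul_assoc _ Q, ← Matrix.mul_add, hST,
      Matrix.mul_one]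
  have hAba : Aba = 0 := by
    rw [hWA, Matrix.add_mul, Matrix.mul_assoc Ab, hWZ, Matrix.mul_zero, add_zero] at hWAZ
    have hAbaSig : Aba * Sig₀ = 0 := by
      rw [← hVZV, ← Matrix.mul_assoc, ← Matrix.mul_assoc, hWAZ, Matrix.zero_mul]
    rw [← Matrix.mul_nonsing_inv_cancel_right Sig₀ Aba ((Sig₀.isUnit_iff_isUnit_det).1 hSig₀),
      hAbaSig, Matrix.zero_mul]
  refine ⟨hAba, hBdec.2.symm.trans hWB, hstab.isHurwitz_of_mul_eq_mul hWQ ?_ hWB⟩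
  rw [hWA, hAba, Matrix.zero_mul, zero_add]

/-- Lemma 5 in the paper: data-driven state decomposition for
stabilizable systems. Given a trajectory `z` of `z' = A_e z + B_e u` (absolutely
continuous, encoded by the integral identity with integrable right-hand side) on
`[0, t_D]` such that `Im ℛ ⊆ Im 𝒵`, and an orthogonal `T_z` putting
`𝒵 := ∫ z zᵀ` in the form `[[Sig₀, 0], [0, 0]]` with `Sig₀ ≻ 0`, the corresponding
partition of `(A_e, B_e)` satisfies `A_ba = 0`, `B_b = 0` and `A_b` Hurwitz. -/
theorem stmt14 {q m l : ℕ}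
    (Ae : Matrix (Fin q) (Fin q) ℝ) (Be : Matrix (Fin q) (Fin m) ℝ)
    (hstab : IsStabilizable Ae Be)
    (tD : ℝ) (htD : 0 < tD)
    (u : ℝ → Fin m → ℝ) (z : ℝ → Fin q → ℝ)
    (hz_cont : ContinuousOn z (Set.Icc 0 tD))
    (hInt : IntervalIntegrable (fun s => Ae.mulVec (z s) + Be.mulVec (u s))
      MeasureTheory.volume 0 tD)
    (hz : ∀ t ∈ Set.Icc (0 : ℝ) tD,
      z t = z 0 + ∫ s in (0 : ℝ)..t, (Ae.mulVec (z s) + Be.mulVec (u s)))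
    (Z : Matrix (Fin q) (Fin q) ℝ)
    (hZ : Z = Matrix.of fun i j => ∫ s in (0 : ℝ)..tD, z s i * z s j)
    (R : Matrix (Fin q) (Fin q × Fin m) ℝ)
    (hR : R = Matrix.of fun i => fun w : Fin q × Fin m => (Ae ^ (w.1 : ℕ) * Be) i w.2)
    (hIm : LinearMap.range R.mulVecLin ≤ LinearMap.range Z.mulVecLin)
    (hrank : Z.rank = l) (hlq : l < q)
    (Tz : Matrix (Fin l ⊕ Fin (q - l)) (Fin q) ℝ)
    (hTz1 : Tz * Tzᵀ = 1) (hTz2 : Tzᵀ * Tz = 1)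
    (Sig₀ : Matrix (Fin l) (Fin l) ℝ) (hSig₀ : Sig₀.PosDef)
    (hZdec : Tz * Z * Tzᵀ = Matrix.fromBlocks Sig₀ 0 0 0)
    (Aa : Matrix (Fin l) (Fin l) ℝ) (Aab : Matrix (Fin l) (Fin (q - l)) ℝ)
    (Aba : Matrix (Fin (q - l)) (Fin l) ℝ) (Ab : Matrix (Fin (q - l)) (Fin (q - l)) ℝ)
    (hAdec : Tz * Ae * Tzᵀ = Matrix.fromBlocks Aa Aab Aba Ab)
    (Ba : Matrix (Fin l) (Fin m) ℝ) (Bb : Matrix (Fin (q - l)) (Fin m) ℝ)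
    (hBdec : Tz * Be = Matrix.fromRows Ba Bb) :
    Aba = 0 ∧ Bb = 0 ∧ IsHurwitz Ab := by
  have : NeZero q := ⟨(Nat.zero_le l |>.trans_lt hlq).ne'⟩
  subst hZ hR
  exact stmt14_general hstab htD ⟨hInt, hz⟩
    ((range_mulVecLin_le_range_reachabilityMatrix Ae Be q).trans hIm) hTz1 hTz2
    hSig₀.isUnit hZdec hAdec hBdec
end
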